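/- Let (A,B) be an invertible Jones pair of n×n complex matrices. Then: (i) N_{A,B} = {A∘F : F ∈ N_A}; (ii) {Θ_{A,B}(M)·Bᵀ : M ∈ N_{A,B}} = N_A; (iii) {Θ_{A,B}(M) : M ∈ N_{A,B}} = {Θ_{A,Bᵀ}(M)ᵀ : M ∈ N_{A,Bᵀ}} (i.e. the dual algebra N_{A,B}' equals the set of transposes of elements of N_{A,Bᵀ}'). -/

import Mathlib

open Matrix

variable {m : Type*} [Fintype m] [DecidableEq m]

/-- The Schur (entrywise) inverse `A^(-)` of a matrix: `(A^(-))_{ij} = (A_{ij})⁻¹`. -/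
noncomputable def sinv (A : Matrix m m ℂ) : Matrix m m ℂ := Matrix.of fun i j => (A i j)⁻¹

/-- A type-II matrix: a Schur invertible matrix `W` with `W * (W^(-))ᵀ = n • I`,
where `n` is the size of the matrix. -/
def IsTypeII (A : Matrix m m ℂ) : Prop :=
  (∀ i j, A i j ≠ 0) ∧ A * (sinv A)ᵀ = (Fintype.card m : ℂ) • (1 : Matrix m m ℂ)

/-- `v_{ij} = (A e_i) ∘ (B e_j)`: the entrywise product of column `i` of `A`
with column `j` of `B`. -/
def colProd (A B : Matrix m m ℂ) (i j : m) : m → ℂ := fun k => A k i * B k j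

/-- Membership in the Nomura algebra `N_{A,B}`: every `v_{ij}` is an eigenvector of `M`. -/
def InNomura (A B M : Matrix m m ℂ) : Prop :=
  ∀ i j, ∃ c : ℂ, M.mulVec (colProd A B i j) = c • colProd A B i j

/-- `S = Θ_{A,B}(M)`: the matrix of eigenvalues, i.e. `M v_{ij} = S_{ij} v_{ij}` for all `i,j`. -/
def IsTheta (A B M S : Matrix m m ℂ) : Prop :=
  ∀ i j, M.mulVec (colProd A B i j) = S i j • colProd A B i j

/-- `(A,B)` is a Jones pair: `A` invertible, `B` Schur invertible, and
`X_A Δ_B X_A = Δ_B X_A Δ_B` and `X_A Δ_{Bᵀ} X_A = Δ_{Bᵀ} X_A Δ_{Bᵀ}`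
as operators on matrices. -/
def IsJonesPair (A B : Matrix m m ℂ) : Prop :=
  IsUnit A ∧ (∀ i j, B i j ≠ 0) ∧
  (∀ M : Matrix m m ℂ, A * (B ⊙ (A * M)) = B ⊙ (A * (B ⊙ M))) ∧
  (∀ M : Matrix m m ℂ, A * (Bᵀ ⊙ (A * M)) = Bᵀ ⊙ (A * (Bᵀ ⊙ M)))

/-- An invertible Jones pair: a Jones pair in which moreover `A` is Schur
invertible and `B` is invertible. -/
def IsInvertibleJonesPair (A B : Matrix m m ℂ) : Prop :=
  IsJonesPair A B ∧ (∀ i j, A i j ≠ 0) ∧ IsUnit B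

/-- `W` is a spin model: for some `d` with `d² = n`, `(d⁻¹ W, W^(-))` is an
invertible Jones pair. -/
def IsSpinModel (W : Matrix m m ℂ) : Prop :=
  ∃ d : ℂ, d ^ 2 = (Fintype.card m : ℂ) ∧ IsInvertibleJonesPair (d⁻¹ • W) (sinv W)

/-- Given an invertible Jones pair `(A,B)` with `A` symmetric, `K` is paired with
`H ∈ N_{A,B}` if `Kᵀ ∈ N_{A,Bᵀ}` and `Θ_{A,B}(H) = (Θ_{A,Bᵀ}(Kᵀ))ᵀ`. -/
def Paired (A B H K : Matrix m m ℂ) : Prop :=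
  ∃ S : Matrix m m ℂ, IsTheta A B H S ∧ IsTheta A Bᵀ Kᵀ Sᵀ

/-- The `4n × 4n` matrix with `4 × 4` block structure
`[[P, Q, R, R], [Q, P, R, R], [S, S, T, U], [S, S, U, T]]`. -/
def blockMat {n : ℕ} (P Q R S T U : Matrix (Fin n) (Fin n) ℂ) :
    Matrix (Fin 4 × Fin n) (Fin 4 × Fin n) ℂ :=
  Matrix.of fun x y =>
    (![![P, Q, R, R], ![Q, P, R, R], ![S, S, T, U], ![S, S, U, T]] x.1 y.1) x.2 y.2

/-- Yamada's `4n × 4n` matrix `V` built from `A`, `B` and `d` with `d² = n`. -/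
noncomputable def Vmat {n : ℕ} (A B : Matrix (Fin n) (Fin n) ℂ) (d : ℂ) :
    Matrix (Fin 4 × Fin n) (Fin 4 × Fin n) ℂ :=
  blockMat (d • A) (-(d • A)) (sinv B) (sinv B)ᵀ (d • A) (-(d • A))

/-!
Applying the Jones relations to matrix units shows that `A` lies in `N_{A,B}` and in `N_{A,Bᵀ}`,
with eigenvalue matrices `B` and `Bᵀ`. By the first of these, `A ∘ (A⁻¹)ᵀ` has rank one; since
its row and column sums are all `1`, it is constant, so `A` is type-II, and then so is `B`.

(i) The `a`-th row of the eigenvalue equations `M v_{ij} = S_{ij} v_{ij}` reads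
`Aᵀ D(M_a) B = D(A_a) S D(B_a)`, where `D` turns a row into a diagonal matrix. For `M = A` the
invertible matrix `Aᵀ D(A_a) B = D(A_a) B D(B_a)` can be cancelled from this equation for
`M = A ∘ F`, which turns it into the equation of `N_A` for `F`.

(ii) Summing the eigenvalue equations over `j`, where all row sums of `B` equal a constant `c ≠ 0`,
gives `c M A = A ∘ (S Bᵀ)ᵀ`. Since `A` is a unit of `N_{A,B}`, this is (i) again, up to the
transposition symmetry of `N_A`.

(iii) Cancelling the same matrix from the left gives `N_A ⊆ N_{B^(-),B}`, and `B` carries the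
vectors `v_{ij}` of `(A, A^(-))` to multiples of those of `(B^(-), B)`, so `B⁻¹ N_A B ⊆ N_A`. Hence
`S Bᵀ ∈ N_A` yields `B⁻¹ (S Bᵀ)ᵀ B = Sᵀ B ∈ N_A`, which is (ii) for `Sᵀ` and the pair `(A, Bᵀ)`.
-/

section SchurInverse

variable {ι : Type*} {A : Matrix ι ι ℂ}

theorem hadamard_sinv_cancel_left (hA : ∀ i j, A i j ≠ 0) (M : Matrix ι ι ℂ) :
    A ⊙ (sinv A ⊙ M) = M := by
  ext i j
  exact mul_inv_cancel_left₀ (hA i j) (M i j)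

variable [Fintype ι] [DecidableEq ι]

theorem diagonal_row_hadamard {κ R : Type*} [NonUnitalNonAssocSemiring R] (A F : Matrix κ ι R)
    (a : κ) :
    diagonal ((A ⊙ F).row a) = diagonal (A.row a) * diagonal (F.row a) :=
  (diagonal_mul_diagonal _ _).symm

theorem diagonal_row_mul_diagonal_row_sinv (hA : ∀ i j, A i j ≠ 0) (a : ι) :
    diagonal (A.row a) * diagonal ((sinv A).row a) = 1 := by
  simp [sinv, hA]

theorem isUnit_diagonal_row (hA : ∀ i j, A i j ≠ 0) (a : ι) : IsUnit (diagonal (A.row a)) :=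
  IsUnit.of_mul_eq_one _ (diagonal_row_mul_diagonal_row_sinv hA a)

end SchurInverse

section Nomura

variable {ι : Type*} [Fintype ι] {A B M N S : Matrix ι ι ℂ}

theorem isTheta_iff_sum :
    IsTheta A B M S ↔ ∀ a i j, ∑ k, M a k * (A k i * B k j) = S i j * (A a i * B a j) := by
  simp only [IsTheta, funext_iff, mulVec, dotProduct, colProd, Pi.smul_apply, smul_eq_mul]
  exact ⟨fun h a i j => h i j a, fun h i j a => h a i j⟩

theorem inNomura_iff_exists_isTheta : InNomura A B M ↔ ∃ S, IsTheta A B M S := by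
  refine ⟨fun h => ?_, fun ⟨S, hS⟩ i j => ⟨S i j, hS i j⟩⟩
  choose S hS using h
  exact ⟨of S, hS⟩

theorem IsTheta.inNomura (h : IsTheta A B M S) : InNomura A B M :=
  inNomura_iff_exists_isTheta.2 ⟨S, h⟩

theorem IsTheta.swap (h : IsTheta A B M S) : IsTheta B A M Sᵀ := by
  intro i j
  have hcomm : colProd B A i j = colProd A B j i := funext fun k => mul_comm _ _
  simpa only [hcomm, transpose_apply] using h j i

theorem InNomura.smul (c : ℂ) (h : InNomura A B M) : InNomura A B (c • M) := by
  intro i j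
  obtain ⟨s, hs⟩ := h i j
  exact ⟨c * s, by rw [smul_mulVec, hs, smul_smul]⟩

theorem InNomura.mul (hM : InNomura A B M) (hN : InNomura A B N) : InNomura A B (M * N) := by
  intro i j
  obtain ⟨s, hs⟩ := hM i j
  obtain ⟨t, ht⟩ := hN i j
  exact ⟨t * s, by rw [← mulVec_mulVec, ht, mulVec_smul, hs, smul_smul]⟩

theorem IsTheta.smul_mul_eq_hadamard {c : ℂ} (hB : ∀ k, ∑ j, B k j = c) (h : IsTheta A B M S) :
    c • (M * A) = A ⊙ (S * Bᵀ)ᵀ := by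
  ext a i
  calc (c • (M * A)) a i = ∑ k, M a k * (A k i * ∑ j, B k j) := by
        simp only [Matrix.smul_apply, mul_apply, hB, smul_eq_mul, mul_comm c, Finset.sum_mul,
          mul_assoc]
    _ = ∑ j, S i j * (A a i * B a j) := by
        simp only [Finset.mul_sum]
        rw [Finset.sum_comm]
        simp only [isTheta_iff_sum.1 h]
    _ = (A ⊙ (S * Bᵀ)ᵀ) a i := by
        simp only [hadamard_apply, transpose_apply, mul_apply, Finset.mul_sum, mul_left_comm]

variable [DecidableEq ι]

theorem isTheta_iff_row :
    IsTheta A B M S ↔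
      ∀ a, Aᵀ * diagonal (M.row a) * B = diagonal (A.row a) * S * diagonal (B.row a) := by
  simp only [isTheta_iff_sum, ← Matrix.ext_iff, mul_apply (M := Aᵀ * _), mul_diagonal,
    diagonal_mul, transpose_apply, row_apply]
  refine forall₃_congr fun a i j => ?_
  rw [show S i j * (A a i * B a j) = A a i * S i j * B a j by ring]
  simp only [mul_comm, mul_left_comm]

theorem isTheta_iff_col :
    IsTheta A B M S ↔
      ∀ j, M * (diagonal (B.col j) * A) = diagonal (B.col j) * A * diagonal (S.col j) := by
  simp only [isTheta_iff_sum, ← Matrix.ext_iff, mul_apply (M := M), mul_diagonal, diagonal_mul,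
    col_apply]
  simp only [mul_comm (A _ _) (B _ _), mul_comm (S _ _)]
  exact ⟨fun h j a i => h a i j, fun h a i j => h j a i⟩

theorem IsTheta.inv (hM : IsUnit M) (hS : ∀ i j, S i j ≠ 0) (h : IsTheta A B M S) :
    IsTheta A B M⁻¹ (sinv S) := by
  intro i j
  have := hM.invertible
  refine inv_mulVec_eq_vec ?_
  rw [mulVec_smul, h, smul_smul, sinv, of_apply, inv_mul_cancel₀ (hS i j), one_smul]

theorem InNomura.conj {A' B' P : Matrix ι ι ℂ} (hP : IsUnit P)
    (hv : ∀ i j, ∃ c : ℂ, P *ᵥ colProd A' B' i j = c • colProd A B i j)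
    (hM : InNomura A B M) : InNomura A' B' (P⁻¹ * M * P) := by
  intro i j
  have := hP.invertible
  obtain ⟨c, hc⟩ := hv i j
  obtain ⟨s, hs⟩ := hM i j
  refine ⟨s, ?_⟩
  rw [mul_assoc, ← mulVec_mulVec]
  refine inv_mulVec_eq_vec ?_
  rw [← mulVec_mulVec, hc, mulVec_smul, mulVec_smul, hs, hc, smul_comm]

theorem IsTheta.apply_mul_apply_eq (hA : IsUnit A) (h : IsTheta A B M S) (a i j : ι) :
    M a i * B i j = B a j * ∑ k, A a k * S k j * A⁻¹ k i := by
  have hdiag : M * diagonal (B.col j) =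
      diagonal (B.col j) * (A * diagonal (S.col j) * A⁻¹) := by
    rw [← mul_nonsing_inv_cancel_right A (M * _) ((isUnit_iff_isUnit_det A).1 hA),
      mul_assoc M, isTheta_iff_col.1 h j]
    simp only [mul_assoc]
  simpa only [mul_diagonal, diagonal_mul, mul_apply (M := A * _), col_apply] using
    congr($hdiag a i)

theorem IsTheta.hadamard_transpose_inv_mul (hA : IsUnit A) (hB : ∀ i j, B i j ≠ 0)
    (h : IsTheta A B M S) : (A ⊙ A⁻¹ᵀ) * S = vecMulVec M.diag 1 := by
  ext a j
  have hdiag := h.apply_mul_apply_eq hA a a j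
  rw [mul_comm] at hdiag
  simpa only [mul_apply, hadamard_apply, transpose_apply, vecMulVec_apply, diag_apply,
    Pi.one_apply, mul_one, mul_right_comm] using (mul_left_cancel₀ (hB a j) hdiag).symm

theorem IsTheta.hadamard_sinv_mul_transpose {c : ℂ} (hA : IsUnit A) (hB : ∀ i j, B i j ≠ 0)
    (hS : ∀ k, ∑ j, S k j = c) (h : IsTheta A B M S) :
    M ⊙ (sinv B * Bᵀ) = c • (1 : Matrix ι ι ℂ) := by
  ext a i
  calc (M ⊙ (sinv B * Bᵀ)) a i = ∑ j, (B a j)⁻¹ * (M a i * B i j) := by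
        simp only [hadamard_apply, mul_apply, Finset.mul_sum, sinv, of_apply, transpose_apply,
          mul_left_comm]
    _ = ∑ j, ∑ k, A a k * A⁻¹ k i * S k j := by
        simp only [h.apply_mul_apply_eq hA, inv_mul_cancel_left₀ (hB _ _), mul_right_comm]
    _ = c * (A * A⁻¹) a i := by
        rw [Finset.sum_comm, mul_comm, mul_apply, Finset.sum_mul]
        simp only [← Finset.mul_sum, hS]
    _ = (c • (1 : Matrix ι ι ℂ)) a i := by
        rw [mul_nonsing_inv A ((isUnit_iff_isUnit_det A).1 hA), Matrix.smul_apply, smul_eq_mul]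

end Nomura

section TypeII

variable {ι : Type*} [Fintype ι] [DecidableEq ι] {A F G : Matrix ι ι ℂ}

theorem isTypeII_of_apply_mul_inv_apply (hA : IsUnit A)
    (h : ∀ i k, A i k * A⁻¹ k i = (Fintype.card ι : ℂ)⁻¹) : IsTypeII A := by
  have hne (i k : ι) : A i k ≠ 0 := by
    have : Nonempty ι := ⟨i⟩
    have hcard : (Fintype.card ι : ℂ)⁻¹ ≠ 0 := by simp
    exact left_ne_zero_of_mul (h i k ▸ hcard)
  have hsinv : (sinv A)ᵀ = (Fintype.card ι : ℂ) • A⁻¹ := by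
    ext k i
    have hinv : A⁻¹ k i = (A i k)⁻¹ * (Fintype.card ι : ℂ)⁻¹ := by
      rw [← h i k, inv_mul_cancel_left₀ (hne i k)]
    have : Nonempty ι := ⟨i⟩
    rw [Matrix.smul_apply, hinv, smul_eq_mul, mul_comm, inv_mul_cancel_right₀ (by simp)]
    rfl
  refine ⟨hne, ?_⟩
  rw [hsinv, Matrix.mul_smul, mul_nonsing_inv A ((isUnit_iff_isUnit_det A).1 hA)]

theorem transpose_mul_eq_mul_diagonal {K : Type*} [CommRing K] {F V W : Matrix ι ι K} {t : ι → K}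
    {c : K} (hV : IsUnit V) (hVW : Vᵀ * W = c • (1 : Matrix ι ι K))
    (hF : F * V = V * diagonal t) : Fᵀ * W = W * diagonal t := by
  refine ((isUnit_transpose V).2 hV).mul_left_cancel ?_
  calc Vᵀ * (Fᵀ * W) = (F * V)ᵀ * W := by rw [transpose_mul, mul_assoc]
    _ = diagonal t * (Vᵀ * W) := by rw [hF, transpose_mul, diagonal_transpose, mul_assoc]
    _ = Vᵀ * W * diagonal t := by rw [hVW, Matrix.mul_smul, smul_mul, mul_one, one_mul]
    _ = Vᵀ * (W * diagonal t) := mul_assoc _ _ _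

namespace IsTypeII

theorem isUnit (hA : IsTypeII A) : IsUnit A := by
  cases isEmpty_or_nonempty ι
  · exact isUnit_of_subsingleton A
  have hinv : A * ((Fintype.card ι : ℂ)⁻¹ • (sinv A)ᵀ) = 1 := by
    rw [Matrix.mul_smul, hA.2, inv_smul_smul₀ (Nat.cast_ne_zero.2 Fintype.card_ne_zero)]
  exact IsUnit.of_mul_eq_one _ hinv

theorem transpose_sinv_eq (hA : IsTypeII A) : (sinv A)ᵀ = (Fintype.card ι : ℂ) • A⁻¹ := by
  have := hA.isUnit.invertible
  rw [← inv_mul_cancel_left_of_invertible A (sinv A)ᵀ, hA.2, Matrix.mul_smul, mul_one]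

theorem transpose_mul_sinv (hA : IsTypeII A) :
    Aᵀ * sinv A = (Fintype.card ι : ℂ) • (1 : Matrix ι ι ℂ) := by
  have := hA.isUnit.invertible
  rw [← transpose_transpose (sinv A), ← transpose_mul, hA.transpose_sinv_eq, smul_mul,
    inv_mul_of_invertible, transpose_smul, transpose_one]

theorem sinv_mul_transpose (hA : IsTypeII A) :
    sinv A * Aᵀ = (Fintype.card ι : ℂ) • (1 : Matrix ι ι ℂ) := by
  simpa using congrArg transpose hA.2

theorem isTheta_transpose (hA : IsTypeII A) (h : IsTheta A (sinv A) F G) :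
    IsTheta A (sinv A) Fᵀ Gᵀ := by
  refine IsTheta.swap (isTheta_iff_col.2 fun j => ?_)
  have hdiag : diagonal (A.col j) * diagonal ((sinv A).col j) = 1 :=
    diagonal_row_mul_diagonal_row_sinv (A := Aᵀ) (fun k l => hA.1 l k) j
  refine transpose_mul_eq_mul_diagonal (c := Fintype.card ι) ?_ ?_ (isTheta_iff_col.1 h j)
  · exact (IsUnit.of_mul_eq_one _ (mul_eq_one_comm.1 hdiag)).mul hA.isUnit
  · calc (diagonal ((sinv A).col j) * A)ᵀ * (diagonal (A.col j) * sinv A)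
        = Aᵀ * (diagonal ((sinv A).col j) * diagonal (A.col j)) * sinv A := by
          simp only [transpose_mul, diagonal_transpose, mul_assoc]
      _ = (Fintype.card ι : ℂ) • (1 : Matrix ι ι ℂ) := by
          rw [mul_eq_one_comm.1 hdiag, mul_one, hA.transpose_mul_sinv]

theorem inNomura_transpose (hA : IsTypeII A) (h : InNomura A (sinv A) F) :
    InNomura A (sinv A) Fᵀ := by
  obtain ⟨G, hG⟩ := inNomura_iff_exists_isTheta.1 h
  exact (hA.isTheta_transpose hG).inNomura

end IsTypeII

end TypeII

section SelfDual

variable {ι : Type*} [Fintype ι]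

theorem mul_eq_inv_card_of_sum_eq_one {K : Type*} [Field K] {u v : ι → K}
    (hrow : ∀ i, ∑ k, u i * v k = 1) (hcol : ∀ k, ∑ i, u i * v k = 1) (i k : ι) :
    u i * v k = (Fintype.card ι : K)⁻¹ := by
  refine eq_inv_of_mul_eq_one_left ?_
  calc u i * v k * (Fintype.card ι : K) = u i * v k * ∑ x, ∑ y, u x * v y := by simp [hrow]
    _ = (∑ y, u i * v y) * ∑ x, u x * v k := by
        simp only [← Finset.mul_sum, ← Finset.sum_mul]
        ring
    _ = 1 := by rw [hrow, hcol, one_mul]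

variable [DecidableEq ι] {A B F G M S : Matrix ι ι ℂ}

theorem IsTheta.apply_mul_inv_apply_eq_inv_card (hA : IsUnit A) (hB : ∀ i j, B i j ≠ 0)
    (hBu : IsUnit B) (h : IsTheta A B A B) (i k : ι) :
    A i k * A⁻¹ k i = (Fintype.card ι : ℂ)⁻¹ := by
  have hrankOne : A ⊙ A⁻¹ᵀ = vecMulVec A.diag (1 ᵥ* B⁻¹) := by
    rw [← vecMulVec_mul, ← h.hadamard_transpose_inv_mul hA hB,
      mul_nonsing_inv_cancel_right B _ ((isUnit_iff_isUnit_det B).1 hBu)]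
  have happly (i k) : A i k * A⁻¹ k i = A.diag i * (1 ᵥ* B⁻¹) k := congr($hrankOne i k)
  have hA' := (isUnit_iff_isUnit_det A).1 hA
  rw [happly]
  refine mul_eq_inv_card_of_sum_eq_one (fun i => ?_) (fun k => ?_) i k
  · simp only [← happly, ← mul_apply, mul_nonsing_inv A hA', one_apply_eq]
  · simp only [← happly, mul_comm (A _ _), ← mul_apply, nonsing_inv_mul A hA', one_apply_eq]

theorem IsTheta.sum_col (hA : IsTypeII A) (hB : ∀ i j, B i j ≠ 0) (h : IsTheta A B M S)
    (a j : ι) : ∑ k, S k j = Fintype.card ι * M a a := by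
  have hscale : (A ⊙ sinv A) * S = (Fintype.card ι : ℂ) • vecMulVec M.diag 1 := by
    rw [← h.hadamard_transpose_inv_mul hA.isUnit hB, ← transpose_transpose (sinv A),
      hA.transpose_sinv_eq, transpose_smul, hadamard_smul, smul_mul]
  simpa [mul_apply, sinv, hA.1, vecMulVec_apply] using congr($hscale a j)

theorem isTheta_hadamard_iff [Nonempty ι] (hA : IsTypeII A) (hB : ∀ i j, B i j ≠ 0)
    (hBu : IsUnit B) (hAB : IsTheta A B A B) (hG : (Fintype.card ι : ℂ) • S = G * B) :
    IsTheta A B (A ⊙ F) S ↔ IsTheta A (sinv A) F G := by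
  have hn : (Fintype.card ι : ℂ) ≠ 0 := Nat.cast_ne_zero.2 Fintype.card_ne_zero
  rw [isTheta_iff_row, isTheta_iff_row]
  refine forall_congr' fun a => ?_
  have hAB_row := isTheta_iff_row.1 hAB a
  have hunit : IsUnit (diagonal (A.row a) * B * diagonal (B.row a)) :=
    ((isUnit_diagonal_row hA.1 a).mul hBu).mul (isUnit_diagonal_row hB a)
  have hleft : Aᵀ * diagonal (F.row a) * sinv A * (diagonal (A.row a) * B * diagonal (B.row a)) =
      (Fintype.card ι : ℂ) • (Aᵀ * diagonal ((A ⊙ F).row a) * B) := by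
    calc _ = Aᵀ * diagonal (F.row a) * (sinv A * Aᵀ) * (diagonal (A.row a) * B) := by
          rw [← hAB_row]
          simp only [mul_assoc]
      _ = (Fintype.card ι : ℂ) • (Aᵀ * (diagonal (F.row a) * diagonal (A.row a)) * B) := by
          rw [hA.sinv_mul_transpose]
          simp only [Matrix.mul_smul, smul_mul, mul_one, mul_assoc]
      _ = _ := by rw [hadamard_comm, diagonal_row_hadamard]
  have hright : diagonal (A.row a) * G * diagonal ((sinv A).row a) *
      (diagonal (A.row a) * B * diagonal (B.row a)) =
        (Fintype.card ι : ℂ) • (diagonal (A.row a) * S * diagonal (B.row a)) := by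
    calc _ = diagonal (A.row a) * G * (diagonal ((sinv A).row a) * diagonal (A.row a)) * B *
            diagonal (B.row a) := by
          simp only [mul_assoc]
      _ = diagonal (A.row a) * (G * B) * diagonal (B.row a) := by
          rw [mul_eq_one_comm.1 (diagonal_row_mul_diagonal_row_sinv hA.1 a), mul_one,
            mul_assoc _ G]
      _ = _ := by rw [← hG, Matrix.mul_smul, smul_mul]
  rw [← hunit.mul_left_inj (b := Aᵀ * _ * sinv A), hleft, hright, smul_right_inj hn]

theorem isTheta_sinv_of_hadamard (hA : ∀ i j, A i j ≠ 0) (hB : IsTypeII B)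
    (hAB : IsTheta A B A B) (h : IsTheta A B (A ⊙ F) S) : IsTheta (sinv B) B F ((sinv B)ᵀ * S) := by
  refine isTheta_iff_row.2 fun a => ?_
  have hunit : IsUnit (diagonal (A.row a) * B * diagonal (B.row a)) :=
    ((isUnit_diagonal_row hA a).mul hB.isUnit).mul (isUnit_diagonal_row hB.1 a)
  refine hunit.mul_left_cancel ?_
  calc diagonal (A.row a) * B * diagonal (B.row a) * ((sinv B)ᵀ * diagonal (F.row a) * B)
      = Aᵀ * diagonal (A.row a) * (B * (sinv B)ᵀ) * diagonal (F.row a) * B := by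
        rw [← isTheta_iff_row.1 hAB a]
        simp only [mul_assoc]
    _ = (Fintype.card ι : ℂ) • (Aᵀ * diagonal ((A ⊙ F).row a) * B) := by
        rw [hB.2, diagonal_row_hadamard]
        simp only [Matrix.mul_smul, smul_mul, mul_one, mul_assoc]
    _ = diagonal (A.row a) * (B * (sinv B)ᵀ) * S * diagonal (B.row a) := by
        rw [isTheta_iff_row.1 h a, hB.2]
        simp only [Matrix.mul_smul, smul_mul, mul_one]
    _ = diagonal (A.row a) * B * (diagonal (B.row a) * diagonal ((sinv B).row a)) *
          (sinv B)ᵀ * S * diagonal (B.row a) := by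
        rw [diagonal_row_mul_diagonal_row_sinv hB.1 a]
        simp only [mul_one, mul_assoc]
    _ = diagonal (A.row a) * B * diagonal (B.row a) *
          (diagonal ((sinv B).row a) * ((sinv B)ᵀ * S) * diagonal (B.row a)) := by
        simp only [mul_assoc]

end SelfDual

namespace IsInvertibleJonesPair

variable {ι : Type*} [Fintype ι] [DecidableEq ι] {A B F M S : Matrix ι ι ℂ}

theorem isUnit_left (h : IsInvertibleJonesPair A B) : IsUnit A := h.1.1

theorem isUnit_right (h : IsInvertibleJonesPair A B) : IsUnit B := h.2.2

theorem left_ne_zero (h : IsInvertibleJonesPair A B) : ∀ i j, A i j ≠ 0 := h.2.1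

theorem right_ne_zero (h : IsInvertibleJonesPair A B) : ∀ i j, B i j ≠ 0 := h.1.2.1

theorem transpose (h : IsInvertibleJonesPair A B) : IsInvertibleJonesPair A Bᵀ := by
  obtain ⟨⟨hAu, hB, hAB, hABt⟩, hA, hBu⟩ := h
  exact ⟨⟨hAu, fun i j => hB j i, hABt, by rwa [transpose_transpose]⟩, hA,
    (isUnit_transpose B).2 hBu⟩

theorem isTheta (h : IsInvertibleJonesPair A B) : IsTheta A B A B := by
  rw [isTheta_iff_sum]
  intro a i j
  have hsingle := congr($(h.1.2.2.1 (single i j 1)) a j)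
  simp only [mul_apply, hadamard_apply, single_apply, and_true, mul_ite, mul_one, mul_zero,
    Finset.sum_ite_eq, Finset.mem_univ, if_true] at hsingle
  calc ∑ k, A a k * (A k i * B k j) = B a j * (A a i * B i j) := by
        simp only [← hsingle, mul_comm (B _ _)]
    _ = B i j * (A a i * B a j) := by ring

theorem isTypeII_left (h : IsInvertibleJonesPair A B) : IsTypeII A :=
  isTypeII_of_apply_mul_inv_apply h.isUnit_left
    (h.isTheta.apply_mul_inv_apply_eq_inv_card h.isUnit_left h.right_ne_zero h.isUnit_right)

theorem sum_row (h : IsInvertibleJonesPair A B) (a i : ι) :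
    ∑ j, B i j = Fintype.card ι * A a a :=
  h.transpose.isTheta.sum_col h.isTypeII_left h.transpose.right_ne_zero a i

theorem isTypeII_right (h : IsInvertibleJonesPair A B) : IsTypeII B := by
  have hsinv : sinv B * Bᵀ = (Fintype.card ι : ℂ) • (1 : Matrix ι ι ℂ) := by
    ext i j
    have hscalar :=
      h.isTheta.hadamard_sinv_mul_transpose h.isUnit_left h.right_ne_zero (h.sum_row i)
    refine mul_left_cancel₀ (h.left_ne_zero i j) (congr($hscalar i j).trans ?_)
    obtain rfl | hij := eq_or_ne i j
    · simp [mul_comm]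
    · simp [hij]
  exact ⟨h.right_ne_zero, by simpa using congrArg Matrix.transpose hsinv⟩

theorem mulVec_colProd_sinv (h : IsInvertibleJonesPair A B) (i j : ι) :
    B *ᵥ colProd A (sinv A) i j = (Fintype.card ι * A j i) • colProd (sinv B) B i j := by
  have hBt := h.transpose
  have hinv := isTheta_iff_sum.1 (hBt.isTheta.inv h.isUnit_left hBt.right_ne_zero) j i
  have hsinv (k : ι) : sinv A k j = Fintype.card ι * A⁻¹ j k :=
    congr($(h.isTypeII_left.transpose_sinv_eq) j k)
  ext x
  calc ∑ k, B x k * (A k i * sinv A k j)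
      = Fintype.card ι * ∑ k, A⁻¹ j k * (A k i * Bᵀ k x) := by
        rw [Finset.mul_sum]
        refine Finset.sum_congr rfl fun k _ => ?_
        rw [hsinv, transpose_apply]
        ring
    _ = Fintype.card ι * A j i * (sinv B x i * B x j) := by
        rw [hinv, transpose_apply, sinv, sinv, of_apply, of_apply, transpose_apply]
        ring

variable [Nonempty ι]

theorem inNomura_hadamard_iff (h : IsInvertibleJonesPair A B) :
    InNomura A B (A ⊙ F) ↔ InNomura A (sinv A) F := by
  have hiff {G S : Matrix ι ι ℂ} (hG : (Fintype.card ι : ℂ) • S = G * B) :=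
    isTheta_hadamard_iff (F := F) h.isTypeII_left h.right_ne_zero h.isUnit_right h.isTheta hG
  simp only [inNomura_iff_exists_isTheta]
  constructor
  · rintro ⟨S, hS⟩
    have := h.isUnit_right.invertible
    exact ⟨_, (hiff (inv_mul_cancel_right_of_invertible B _).symm).1 hS⟩
  · rintro ⟨G, hG⟩
    exact ⟨_, (hiff (smul_inv_smul₀ (by simp) (G * B))).2 hG⟩

theorem setOf_inNomura_eq (h : IsInvertibleJonesPair A B) :
    {M | InNomura A B M} = {M | ∃ F, InNomura A (sinv A) F ∧ M = A ⊙ F} := by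
  ext M
  constructor
  · intro hM
    have hM' := hadamard_sinv_cancel_left h.left_ne_zero M
    exact ⟨sinv A ⊙ M, h.inNomura_hadamard_iff.1 (hM'.symm ▸ hM), hM'.symm⟩
  · rintro ⟨F, hF, rfl⟩
    exact h.inNomura_hadamard_iff.2 hF

theorem inNomura_mul_transpose (h : IsInvertibleJonesPair A B) (hMS : IsTheta A B M S) :
    InNomura A (sinv A) (S * Bᵀ) := by
  obtain ⟨a⟩ := ‹Nonempty ι›
  have hprod : InNomura A B (A ⊙ (S * Bᵀ)ᵀ) :=
    hMS.smul_mul_eq_hadamard (h.sum_row a) ▸ (hMS.inNomura.mul h.isTheta.inNomura).smul _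
  exact transpose_transpose (S * Bᵀ) ▸
    h.isTypeII_left.inNomura_transpose (h.inNomura_hadamard_iff.1 hprod)

theorem exists_isTheta_mul_transpose_eq (h : IsInvertibleJonesPair A B)
    (hF : InNomura A (sinv A) F) : ∃ M S, IsTheta A B M S ∧ S * Bᵀ = F := by
  obtain ⟨a⟩ := ‹Nonempty ι›
  have hc : (Fintype.card ι : ℂ) * A a a ≠ 0 := mul_ne_zero (by simp) (h.left_ne_zero a a)
  have hdet := (isUnit_iff_isUnit_det A).1 h.isUnit_left
  have hAF : InNomura A B (A ⊙ Fᵀ) :=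
    h.inNomura_hadamard_iff.2 (h.isTypeII_left.inNomura_transpose hF)
  have hAinv : InNomura A B A⁻¹ := (h.isTheta.inv h.isUnit_left h.right_ne_zero).inNomura
  obtain ⟨S, hS⟩ := inNomura_iff_exists_isTheta.1
    ((hAF.mul hAinv).smul ((Fintype.card ι : ℂ) * A a a)⁻¹)
  refine ⟨_, S, hS, transpose_injective ?_⟩
  have hSB : A ⊙ (S * Bᵀ)ᵀ = A ⊙ Fᵀ := by
    rw [← hS.smul_mul_eq_hadamard (h.sum_row a), smul_mul, smul_inv_smul₀ hc,
      nonsing_inv_mul_cancel_right A _ hdet]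
  ext i j
  exact mul_left_cancel₀ (h.left_ne_zero i j) congr($hSB i j)

theorem setOf_isTheta_mul_transpose_eq (h : IsInvertibleJonesPair A B) :
    {P | ∃ M S, IsTheta A B M S ∧ P = S * Bᵀ} = {F | InNomura A (sinv A) F} := by
  ext F
  constructor
  · rintro ⟨M, S, hMS, rfl⟩
    exact h.inNomura_mul_transpose hMS
  · intro hF
    obtain ⟨M, S, hMS, hSF⟩ := h.exists_isTheta_mul_transpose_eq hF
    exact ⟨M, S, hMS, hSF.symm⟩

theorem inNomura_conj (h : IsInvertibleJonesPair A B) (hF : InNomura A (sinv A) F) :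
    InNomura A (sinv A) (B⁻¹ * F * B) := by
  obtain ⟨S, hS⟩ := inNomura_iff_exists_isTheta.1 (h.inNomura_hadamard_iff.2 hF)
  have hF' := isTheta_sinv_of_hadamard h.left_ne_zero h.isTypeII_right h.isTheta hS
  exact hF'.inNomura.conj h.isUnit_right fun i j => ⟨_, h.mulVec_colProd_sinv i j⟩

theorem exists_isTheta_transpose (h : IsInvertibleJonesPair A B) (hMS : IsTheta A B M S) :
    ∃ N, IsTheta A Bᵀ N Sᵀ := by
  have hBu := h.isUnit_right.invertible
  have hSB : InNomura A (sinv A) (Sᵀ * B) := by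
    simpa using h.inNomura_conj (h.isTypeII_left.inNomura_transpose (h.inNomura_mul_transpose hMS))
  obtain ⟨N, T, hNT, hTB⟩ := h.transpose.exists_isTheta_mul_transpose_eq hSB
  rw [transpose_transpose] at hTB
  exact ⟨N, h.isUnit_right.mul_right_cancel hTB ▸ hNT⟩

theorem setOf_isTheta_eq_transpose (h : IsInvertibleJonesPair A B) :
    {S | ∃ M, IsTheta A B M S} = {P | ∃ M S, IsTheta A Bᵀ M S ∧ P = Sᵀ} := by
  ext S
  constructor
  · rintro ⟨M, hMS⟩
    obtain ⟨N, hN⟩ := h.exists_isTheta_transpose hMS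
    exact ⟨N, Sᵀ, hN, (transpose_transpose S).symm⟩
  · rintro ⟨M, S, hMS, rfl⟩
    simpa using h.transpose.exists_isTheta_transpose hMS

end IsInvertibleJonesPair

theorem NAB_structure_of_invertible_jones_pair_general {ι : Type*} [Fintype ι] [DecidableEq ι]
    [Nonempty ι] (A B : Matrix ι ι ℂ) (h : IsInvertibleJonesPair A B) :
    {M : Matrix ι ι ℂ | InNomura A B M} =
      {M : Matrix ι ι ℂ | ∃ F, InNomura A (sinv A) F ∧ M = A ⊙ F} ∧
    {P : Matrix ι ι ℂ | ∃ M S, IsTheta A B M S ∧ P = S * Bᵀ} =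
      {F : Matrix ι ι ℂ | InNomura A (sinv A) F} ∧
    {S : Matrix ι ι ℂ | ∃ M, IsTheta A B M S} =
      {P : Matrix ι ι ℂ | ∃ M S, IsTheta A Bᵀ M S ∧ P = Sᵀ} :=
  ⟨h.setOf_inNomura_eq, h.setOf_isTheta_mul_transpose_eq, h.setOf_isTheta_eq_transpose⟩

theorem NAB_structure_of_invertible_jones_pair {n : ℕ} (hn : 0 < n)
    (A B : Matrix (Fin n) (Fin n) ℂ) (h : IsInvertibleJonesPair A B) :
    {M : Matrix (Fin n) (Fin n) ℂ | InNomura A B M} =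
      {M : Matrix (Fin n) (Fin n) ℂ | ∃ F, InNomura A (sinv A) F ∧ M = A ⊙ F} ∧
    {P : Matrix (Fin n) (Fin n) ℂ | ∃ M S, IsTheta A B M S ∧ P = S * Bᵀ} =
      {F : Matrix (Fin n) (Fin n) ℂ | InNomura A (sinv A) F} ∧
    {S : Matrix (Fin n) (Fin n) ℂ | ∃ M, IsTheta A B M S} =
      {P : Matrix (Fin n) (Fin n) ℂ | ∃ M S, IsTheta A Bᵀ M S ∧ P = Sᵀ} := by
  have : Nonempty (Fin n) := ⟨⟨0, hn⟩⟩
  exact NAB_structure_of_invertible_jones_pair_general A B h
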